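/- (Uniqueness of the generalized solution) Suppose (F_k), (u_{0k}), (v_k) and (F̃_k), (ũ_{0k}), (ṽ_k) are two sequences of data converging uniformly (on Ḡ×[0,T], Ḡ, and S×[0,T] respectively) to the same limits F, u₀, v, and for each k there exist classical solutions u_k and ũ_k of the initial-boundary-value problems for the time-fractional diffusion equation with data (F_k, u_{0k}, v_k) and (F̃_k, ũ_{0k}, ṽ_k) respectively. If u_k → u and ũ_k → ũ uniformly on Ḡ×[0,T] for continuous functions u, ũ, then u = ũ on Ḡ×[0,T]. -/

import Mathlib

/-!
Let `u(x₀, t₀)` be the maximum of a classical solution over `Ḡ×[0,t]`. If it is nonnegative and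
attained at an interior point with `t₀ > 0`, then `div(p grad u) ≤ 0` and `-q u ≤ 0` there, while
Luchko's extremum principle bounds the Caputo derivative from below by
`t₀ ^ (-α) / Γ(1 - α) * (u(x₀, t₀) - u(x₀, 0))`; the equation then gives
`u(x₀, t₀) ≤ u(x₀, 0) + Γ(1 - α) * t₀ ^ α * F(x₀, t₀)`. Hence a solution is bounded above by its
initial and boundary data plus `Γ(1 - α) * T ^ α` times a bound on the source. By linearity this
controls the difference of two classical solutions by the difference of their data, and the
estimate survives in the uniform limit.
-/

open MeasureTheory Set Filter Topology

/-- The Caputo fractional derivative of order `α` of `f` at `t`: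
`(D^α f)(t) = (1/Γ(1−α)) ∫₀ᵗ (t−s)^{−α} f'(s) ds`. -/
noncomputable def caputo (α : ℝ) (f : ℝ → ℝ) (t : ℝ) : ℝ :=
  (1 / Real.Gamma (1 - α)) * ∫ s in (0:ℝ)..t, (t - s) ^ (-α) * deriv f s

/-- The elliptic part `div(p(x) grad w)(x) = ∑_j ∂/∂x_j (p(x) ∂w/∂x_j)(x)`. -/
noncomputable def divPGrad (n : ℕ) (p : (Fin n → ℝ) → ℝ) (w : (Fin n → ℝ) → ℝ)
    (x : Fin n → ℝ) : ℝ :=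
  ∑ j : Fin n, fderiv ℝ (fun y => p y * fderiv ℝ w y (Pi.single j 1)) x (Pi.single j 1)

/-- `u` is a (classical) solution of the time-fractional diffusion equation
`(D_t^α u)(x,t) = div(p grad u) − q u + F` in `Ω_T = G × (0,T)`:
`u ∈ C(Ḡ×[0,T])`, twice continuously differentiable in `x` on `G`, for each `x ∈ G`
the map `t ↦ u(x,t)` is `C¹` on `(0,T]` with integrable derivative, and the equation
holds pointwise in `Ω_T`. -/
def IsSolutionTFDE (n : ℕ) (α T : ℝ) (G : Set (Fin n → ℝ))
    (p q : (Fin n → ℝ) → ℝ) (F : (Fin n → ℝ) → ℝ → ℝ)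
    (u : (Fin n → ℝ) → ℝ → ℝ) : Prop :=
  ContinuousOn (fun z : (Fin n → ℝ) × ℝ => u z.1 z.2) (closure G ×ˢ Set.Icc 0 T) ∧
  (∀ t ∈ Set.Ioo (0:ℝ) T, ContDiffOn ℝ 2 (fun x => u x t) G) ∧
  (∀ x ∈ G, ContDiffOn ℝ 1 (u x) (Set.Ioc 0 T) ∧
    IntervalIntegrable (deriv (u x)) MeasureTheory.volume 0 T) ∧
  (∀ x ∈ G, ∀ t ∈ Set.Ioo (0:ℝ) T,
    caputo α (u x) t = divPGrad n p (fun y => u y t) x - q x * u x t + F x t)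

theorem tendstoUniformlyOn_sub_zero_of_eqOn {ι β E : Type*} [UniformSpace E] [AddGroup E]
    [IsUniformAddGroup E] {l : Filter ι} {s : Set β} {f f' g g' : ι → β → E} {φ : β → E}
    (hf : TendstoUniformlyOn f φ l s) (hf' : TendstoUniformlyOn f' φ l s)
    (hfg : ∀ k, EqOn (f k) (g k) s) (hfg' : ∀ k, EqOn (f' k) (g' k) s) :
    TendstoUniformlyOn (fun k x => g k x - g' k x) 0 l s := by
  have hg := hf.congr (.of_forall hfg)
  have hg' := hf'.congr (.of_forall hfg')
  simpa using! hg.sub hg'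

section WeaklySingularKernel

variable {a b r : ℝ}

theorem intervalIntegrable_sub_rpow_mul {g : ℝ → ℝ} (hr : -1 < r) (hab : a < b)
    (hg : IntervalIntegrable g volume a b) (hgc : ContinuousOn g (Ioc a b)) :
    IntervalIntegrable (fun s => (b - s) ^ r * g s) volume a b := by
  obtain ⟨m, ham, hmb⟩ := exists_between hab
  have kernel_regular : IntervalIntegrable (fun s => (b - s) ^ r * g s) volume a m := by
    refine (hg.mono_set ?_).continuousOn_mul (ContinuousOn.rpow_const (by fun_prop) ?_)
    · exact uIcc_subset_uIcc_left (mem_uIcc_of_le ham.le hmb.le)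
    · intro s hs
      rw [uIcc_of_le ham.le] at hs
      exact .inl (sub_pos.2 (hs.2.trans_lt hmb)).ne'
  have factor_regular : IntervalIntegrable (fun s => (b - s) ^ r * g s) volume m b := by
    refine IntervalIntegrable.mul_continuousOn ?_ (hgc.mono ?_)
    · simpa using (intervalIntegral.intervalIntegrable_rpow' (a := b - m) (b := b - b)
        hr).comp_sub_left b
    · rw [uIcc_of_le hmb.le]
      exact fun s hs => ⟨ham.trans_le hs.1, hs.2⟩
  exact kernel_regular.trans factor_regular

theorem tendsto_sub_rpow_mul_sub {f : ℝ → ℝ} (hr : -1 < r) (hf : DifferentiableAt ℝ f b) :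
    Tendsto (fun s => (b - s) ^ r * (f s - f b)) (𝓝[<] b) (𝓝 0) := by
  have increment : (fun s => f s - f b) =O[𝓝[<] b] fun s => b - s :=
    (hf.isBigO_sub.mono nhdsWithin_le_nhds).trans
      (Asymptotics.isBigO_of_le _ fun s => (norm_sub_rev s b).le)
  have power_limit : Tendsto (fun s => (b - s) ^ (r + 1)) (𝓝[<] b) (𝓝 0) := by
    have : ContinuousAt (fun s => (b - s) ^ (r + 1)) b :=
      ContinuousAt.rpow_const (by fun_prop) (.inr (by linarith))
    simpa [Real.zero_rpow (by linarith : r + 1 ≠ 0)] using this.tendsto.mono_left nhdsWithin_le_nhds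
  refine ((Asymptotics.isBigO_refl _ _).mul increment).trans_tendsto (power_limit.congr' ?_)
  filter_upwards [self_mem_nhdsWithin] with s hs
  exact Real.rpow_add_one (sub_pos.2 hs).ne' r

-- Integration by parts leaves the extra term `∫ -r * (b - s) ^ (r - 1) * (f b - f s)`, whose
-- integrand is nonnegative when `f b` is the maximum.
theorem sub_rpow_mul_sub_le_integral_of_le {f f' : ℝ → ℝ} (hr : -1 < r) (hr0 : r ≤ 0) (hab : a < b)
    (hfc : ContinuousOn f (Icc a b)) (hf : ∀ s ∈ Ioc a b, HasDerivAt f (f' s) s)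
    (hint : IntervalIntegrable (fun s => (b - s) ^ r * f' s) volume a b)
    (hmax : ∀ s ∈ Icc a b, f s ≤ f b) :
    (b - a) ^ r * (f b - f a) ≤ ∫ s in a..b, (b - s) ^ r * f' s := by
  have cont : ContinuousOn (fun s => (b - s) ^ r * (f s - f b)) (Icc a b) := by
    intro s hs
    obtain rfl | hsb := hs.2.eq_or_lt
    · rw [continuousWithinAt_Icc_iff_Iic hab, ← continuousWithinAt_Iio_iff_Iic, ContinuousWithinAt]
      simpa using tendsto_sub_rpow_mul_sub hr (hf s ⟨hab, le_rfl⟩).differentiableAt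
    · exact (ContinuousWithinAt.rpow_const (by fun_prop) (.inl (sub_pos.2 hsb).ne')).mul
        ((hfc s hs).sub continuousWithinAt_const)
  have deriv_kernel_mul : ∀ s ∈ Ioo a b, HasDerivAt (fun s => (b - s) ^ r * (f s - f b))
      (-1 * r * (b - s) ^ (r - 1) * (f s - f b) + (b - s) ^ r * f' s) s := fun s hs =>
    (((hasDerivAt_id s).const_sub b).rpow_const (.inl (sub_pos.2 hs.2).ne')).mul
      ((hf s ⟨hs.1, hs.2.le⟩).sub_const (f b))
  have le_integral := intervalIntegral.sub_le_integral_of_hasDeriv_right_of_le hab.le cont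
    (fun s hs => (deriv_kernel_mul s hs).hasDerivWithinAt)
    ((intervalIntegrable_iff_integrableOn_Icc_of_le hab.le).1 hint) fun s hs => by
      have : -1 * r * (b - s) ^ (r - 1) * (f s - f b) ≤ 0 :=
        mul_nonpos_of_nonneg_of_nonpos
          (mul_nonneg (by linarith) (Real.rpow_nonneg (sub_pos.2 hs.2).le _))
          (sub_nonpos.2 (hmax s ⟨hs.1.le, hs.2.le⟩))
      linarith
  calc (b - a) ^ r * (f b - f a)
      = (b - b) ^ r * (f b - f b) - (b - a) ^ r * (f a - f b) := by ring
    _ ≤ _ := le_integral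

end WeaklySingularKernel

section Caputo

variable {α t : ℝ} {f g : ℝ → ℝ}

theorem caputo_sub (ht : 0 ≤ t) (hf : ∀ s ∈ Ioo 0 t, DifferentiableAt ℝ f s)
    (hg : ∀ s ∈ Ioo 0 t, DifferentiableAt ℝ g s)
    (hfi : IntervalIntegrable (fun s => (t - s) ^ (-α) * deriv f s) volume 0 t)
    (hgi : IntervalIntegrable (fun s => (t - s) ^ (-α) * deriv g s) volume 0 t) :
    caputo α (fun s => f s - g s) t = caputo α f t - caputo α g t := by
  rw [caputo, caputo, caputo, ← mul_sub, ← intervalIntegral.integral_sub hfi hgi]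
  congr 1
  refine intervalIntegral.integral_congr_Ioo_of_le ht fun s hs => ?_
  simp only [deriv_fun_sub (hf s hs) (hg s hs), mul_sub]

theorem rpow_div_Gamma_mul_sub_le_caputo (hα : 0 ≤ α) (hα1 : α < 1) (ht : 0 < t)
    (hfc : ContinuousOn f (Icc 0 t)) (hf : ∀ s ∈ Ioc 0 t, DifferentiableAt ℝ f s)
    (hint : IntervalIntegrable (fun s => (t - s) ^ (-α) * deriv f s) volume 0 t)
    (hmax : ∀ s ∈ Icc 0 t, f s ≤ f t) :
    t ^ (-α) / Real.Gamma (1 - α) * (f t - f 0) ≤ caputo α f t := by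
  have : 0 < Real.Gamma (1 - α) := Real.Gamma_pos_of_pos (by linarith)
  have le_integral := sub_rpow_mul_sub_le_integral_of_le (by linarith) (by linarith) ht hfc
    (fun s hs => (hf s hs).hasDerivAt) hint hmax
  calc t ^ (-α) / Real.Gamma (1 - α) * (f t - f 0)
      = 1 / Real.Gamma (1 - α) * ((t - 0) ^ (-α) * (f t - f 0)) := by rw [sub_zero]; ring
    _ ≤ caputo α f t := by unfold caputo; gcongr

end Caputo

section Elliptic

theorem eventually_differentiableAt_of_contDiffAt {𝕜 E V : Type*} [NontriviallyNormedField 𝕜]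
    [NormedAddCommGroup E] [NormedSpace 𝕜 E] [NormedAddCommGroup V] [NormedSpace 𝕜 V]
    {f : E → V} {x : E} (hf : ContDiffAt 𝕜 1 f x) : ∀ᶠ y in 𝓝 x, DifferentiableAt 𝕜 f y :=
  (hf.eventually (by simp)).mono fun _ hy => hy.differentiableAt one_ne_zero

theorem deriv_mul_deriv_nonpos_of_isLocalMax {p f : ℝ → ℝ} {a : ℝ} (hp : ∀ᶠ y in 𝓝 a, 0 < p y)
    (hf : ContinuousAt f a) (hmax : IsLocalMax f a) :
    deriv (fun y => p y * deriv f y) a ≤ 0 := by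
  by_contra! hpos
  have flux_sign : ∀ᶠ y in 𝓝 a, SignType.sign (p y * deriv f y) = SignType.sign (y - a) :=
    eventually_nhdsWithin_sign_eq_of_deriv_pos hpos (by simp [hmax.deriv_eq_zero])
  have deriv_sign : ∀ᶠ y in 𝓝 a, SignType.sign (deriv f y) = SignType.sign (y - a) := by
    filter_upwards [flux_sign, hp] with y hy hpy
    rwa [sign_mul, sign_pos hpy, one_mul] at hy
  have hmin : IsLocalMin f a :=
    isLocalMin_of_sign_deriv hf (deriv_sign.filter_mono nhdsWithin_le_nhds)
  have locally_const : f =ᶠ[𝓝 a] fun _ => f a := by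
    filter_upwards [hmax, hmin] with y hle hge using le_antisymm hle hge
  have flux_zero : (fun y => p y * deriv f y) =ᶠ[𝓝 a] fun _ => 0 := by
    filter_upwards [locally_const.deriv] with y hy
    simp [hy]
  simp [flux_zero.deriv_eq] at hpos

theorem fderiv_mul_fderiv_apply_nonpos_of_isLocalMax {E : Type*} [NormedAddCommGroup E]
    [NormedSpace ℝ E] {p w : E → ℝ} {x : E} (hp : ∀ᶠ y in 𝓝 x, 0 < p y)
    (hw : ∀ᶠ y in 𝓝 x, DifferentiableAt ℝ w y) (hmax : IsLocalMax w x) (e : E) :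
    fderiv ℝ (fun y => p y * fderiv ℝ w y e) x e ≤ 0 := by
  by_cases hdiff : DifferentiableAt ℝ (fun y => p y * fderiv ℝ w y e) x
  swap
  · simp [fderiv_zero_of_not_differentiableAt hdiff]
  have line_tendsto : Tendsto (fun s : ℝ => x + s • e) (𝓝 0) (𝓝 x) :=
    Continuous.tendsto' (by fun_prop) 0 x (by simp)
  have line_deriv (s : ℝ) : HasDerivAt (fun s : ℝ => x + s • e) e s := by
    simpa using ((hasDerivAt_id s).smul_const e).const_add x
  have deriv_along_line : ∀ᶠ s : ℝ in 𝓝 0,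
      deriv (fun s : ℝ => w (x + s • e)) s = fderiv ℝ w (x + s • e) e := by
    filter_upwards [line_tendsto.eventually hw] with s hs
    exact (hs.hasFDerivAt.comp_hasDerivAt s (line_deriv s)).deriv
  have max_along_line : IsLocalMax (fun s : ℝ => w (x + s • e)) 0 := by
    filter_upwards [line_tendsto.eventually hmax] with s hs
    simpa using hs
  have cont_along_line : ContinuousAt (fun s : ℝ => w (x + s • e)) 0 :=
    ContinuousAt.comp (by simpa using hw.self_of_nhds.continuousAt) (line_deriv 0).continuousAt
  calc fderiv ℝ (fun y => p y * fderiv ℝ w y e) x e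
      = deriv (fun s : ℝ => p (x + s • e) * fderiv ℝ w (x + s • e) e) 0 :=
        hdiff.lineDeriv_eq_fderiv.symm
    _ = deriv (fun s : ℝ => p (x + s • e) * deriv (fun s : ℝ => w (x + s • e)) s) 0 :=
        EventuallyEq.deriv_eq (by filter_upwards [deriv_along_line] with s hs; rw [hs])
    _ ≤ 0 := deriv_mul_deriv_nonpos_of_isLocalMax (line_tendsto.eventually hp) cont_along_line
        max_along_line

variable {n : ℕ} {p w w' : (Fin n → ℝ) → ℝ} {x : Fin n → ℝ}

theorem divPGrad_nonpos_of_isLocalMax (hp : ∀ᶠ y in 𝓝 x, 0 < p y)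
    (hw : ∀ᶠ y in 𝓝 x, DifferentiableAt ℝ w y) (hmax : IsLocalMax w x) :
    divPGrad n p w x ≤ 0 :=
  Finset.sum_nonpos fun _ _ => fderiv_mul_fderiv_apply_nonpos_of_isLocalMax hp hw hmax _

theorem divPGrad_sub (hp : DifferentiableAt ℝ p x) (hw : ContDiffAt ℝ 2 w x)
    (hw' : ContDiffAt ℝ 2 w' x) :
    divPGrad n p (fun y => w y - w' y) x = divPGrad n p w x - divPGrad n p w' x := by
  have flux_differentiable {v : (Fin n → ℝ) → ℝ} (hv : ContDiffAt ℝ 2 v x) (e : Fin n → ℝ) :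
      DifferentiableAt ℝ (fun y => p y * fderiv ℝ v y e) x :=
    hp.mul (((hv.fderiv_right (m := 1) (by norm_num)).differentiableAt (by simp)).clm_apply
      (differentiableAt_const e))
  have flux_sub (e : Fin n → ℝ) : (fun y => p y * fderiv ℝ (fun y => w y - w' y) y e) =ᶠ[𝓝 x]
      fun y => p y * fderiv ℝ w y e - p y * fderiv ℝ w' y e := by
    filter_upwards [eventually_differentiableAt_of_contDiffAt (hw.of_le one_le_two),
      eventually_differentiableAt_of_contDiffAt (hw'.of_le one_le_two)] with y hy hy'
    rw [fderiv_fun_sub hy hy', sub_apply, mul_sub]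
  rw [divPGrad, divPGrad, divPGrad, ← Finset.sum_sub_distrib]
  refine Finset.sum_congr rfl fun j _ => ?_
  rw [(flux_sub _).fderiv_eq,
    fderiv_fun_sub (flux_differentiable hw _) (flux_differentiable hw' _), sub_apply]

end Elliptic

namespace IsSolutionTFDE

variable {n : ℕ} {α T : ℝ} {G : Set (Fin n → ℝ)} {p q : (Fin n → ℝ) → ℝ}
  {F F' u u' : (Fin n → ℝ) → ℝ → ℝ} {x : Fin n → ℝ} {t : ℝ}

theorem continuousOn_time (h : IsSolutionTFDE n α T G p q F u) (hx : x ∈ closure G) :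
    ContinuousOn (u x) (Icc 0 T) :=
  h.1.comp (by fun_prop : ContinuousOn (fun s => (x, s)) (Icc 0 T)) fun _ hs => ⟨hx, hs⟩

theorem caputo_eq (h : IsSolutionTFDE n α T G p q F u) (hx : x ∈ G) (ht : t ∈ Ioo 0 T) :
    caputo α (u x) t = divPGrad n p (fun y => u y t) x - q x * u x t + F x t :=
  h.2.2.2 x hx t ht

theorem differentiableAt_time (h : IsSolutionTFDE n α T G p q F u) (hx : x ∈ G)
    (ht : t ∈ Ioo 0 T) : DifferentiableAt ℝ (u x) t :=
  ((h.2.2.1 x hx).1.contDiffAt (Ioc_mem_nhds ht.1 ht.2)).differentiableAt (by simp)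

theorem contDiffAt_space (h : IsSolutionTFDE n α T G p q F u) (hG : IsOpen G) (hx : x ∈ G)
    (ht : t ∈ Ioo 0 T) : ContDiffAt ℝ 2 (fun y => u y t) x :=
  (h.2.1 t ht).contDiffAt (hG.mem_nhds hx)

theorem intervalIntegrable_kernel_mul_deriv (h : IsSolutionTFDE n α T G p q F u) (hα1 : α < 1)
    (hx : x ∈ G) (ht : t ∈ Ioo 0 T) :
    IntervalIntegrable (fun s => (t - s) ^ (-α) * deriv (u x) s) volume 0 t := by
  obtain ⟨hC1, hint⟩ := h.2.2.1 x hx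
  refine intervalIntegrable_sub_rpow_mul (by linarith) ht.1 (hint.mono_set ?_) ?_
  · exact uIcc_subset_uIcc_left (mem_uIcc_of_le ht.1.le ht.2.le)
  · exact ((hC1.mono Ioo_subset_Ioc_self).continuousOn_deriv_of_isOpen isOpen_Ioo le_rfl).mono
      fun s hs => ⟨hs.1, hs.2.trans_lt ht.2⟩

theorem sub (hα1 : α < 1) (hT : 0 ≤ T) (hG : IsOpen G) (hp : DifferentiableOn ℝ p G)
    (h : IsSolutionTFDE n α T G p q F u) (h' : IsSolutionTFDE n α T G p q F' u') :
    IsSolutionTFDE n α T G p q (fun x t => F x t - F' x t) (fun x t => u x t - u' x t) := by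
  refine ⟨h.1.sub h'.1, fun t ht => (h.2.1 t ht).sub (h'.2.1 t ht), fun x hx =>
    ⟨(h.2.2.1 x hx).1.sub (h'.2.2.1 x hx).1, ?_⟩, fun x hx t ht => ?_⟩
  · refine ((h.2.2.1 x hx).2.sub (h'.2.2.1 x hx).2).congr_uIoo fun s hs => ?_
    rw [uIoo_of_le hT] at hs
    exact (deriv_fun_sub (h.differentiableAt_time hx hs) (h'.differentiableAt_time hx hs)).symm
  · have mem_Ioo {s : ℝ} (hs : s ∈ Ioo 0 t) : s ∈ Ioo 0 T := ⟨hs.1, hs.2.trans ht.2⟩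
    have caputo_diff :
        caputo α (fun s => u x s - u' x s) t = caputo α (u x) t - caputo α (u' x) t :=
      caputo_sub ht.1.le (fun s hs => h.differentiableAt_time hx (mem_Ioo hs))
        (fun s hs => h'.differentiableAt_time hx (mem_Ioo hs))
        (h.intervalIntegrable_kernel_mul_deriv hα1 hx ht)
        (h'.intervalIntegrable_kernel_mul_deriv hα1 hx ht)
    have divPGrad_diff := divPGrad_sub (hp.differentiableAt (hG.mem_nhds hx))
      (h.contDiffAt_space hG hx ht) (h'.contDiffAt_space hG hx ht)
    rw [caputo_diff, divPGrad_diff, h.caputo_eq hx ht, h'.caputo_eq hx ht]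
    ring

theorem le_initial_add_of_isLocalMax (h : IsSolutionTFDE n α T G p q F u) (hα : 0 ≤ α)
    (hα1 : α < 1) (hG : IsOpen G) (hp : ∀ y ∈ G, 0 < p y) (hx : x ∈ G) (ht : t ∈ Ioo 0 T)
    (hq : 0 ≤ q x) (hu : 0 ≤ u x t) (hspace : IsLocalMax (fun y => u y t) x)
    (htime : ∀ s ∈ Icc 0 t, u x s ≤ u x t) :
    u x t ≤ u x 0 + F x t * (Real.Gamma (1 - α) * t ^ α) := by
  have hΓ : 0 < Real.Gamma (1 - α) := Real.Gamma_pos_of_pos (by linarith)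
  have htα : 0 < t ^ α := Real.rpow_pos_of_pos ht.1 α
  have divPGrad_nonpos : divPGrad n p (fun y => u y t) x ≤ 0 :=
    divPGrad_nonpos_of_isLocalMax (eventually_of_mem (hG.mem_nhds hx) hp)
      (eventually_differentiableAt_of_contDiffAt
        ((h.contDiffAt_space hG hx ht).of_le one_le_two)) hspace
  have quotient_le : (u x t - u x 0) / (Real.Gamma (1 - α) * t ^ α) ≤ F x t :=
    calc (u x t - u x 0) / (Real.Gamma (1 - α) * t ^ α)
        = t ^ (-α) / Real.Gamma (1 - α) * (u x t - u x 0) := by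
          rw [Real.rpow_neg ht.1.le]; field_simp
      _ ≤ caputo α (u x) t :=
          rpow_div_Gamma_mul_sub_le_caputo hα hα1 ht.1
            ((h.continuousOn_time (subset_closure hx)).mono (Icc_subset_Icc_right ht.2.le))
            (fun s hs => h.differentiableAt_time hx ⟨hs.1, hs.2.trans_lt ht.2⟩)
            (h.intervalIntegrable_kernel_mul_deriv hα1 hx ht) htime
      _ = divPGrad n p (fun y => u y t) x - q x * u x t + F x t := h.caputo_eq hx ht
      _ ≤ F x t := by linarith [mul_nonneg hq hu]
  linarith [(div_le_iff₀ (by positivity)).1 quotient_le]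

section APriori

variable {M N : ℝ}

theorem le_of_data_le_of_lt (h : IsSolutionTFDE n α T G p q F u) (hα : 0 ≤ α) (hα1 : α < 1)
    (hG : IsOpen G) (hGb : Bornology.IsBounded G) (hp : ∀ y ∈ G, 0 < p y) (hq : ∀ y ∈ G, 0 ≤ q y)
    (hM : 0 ≤ M) (hN : 0 ≤ N) (hF : ∀ y ∈ G, ∀ s ∈ Ioo 0 T, F y s ≤ N)
    (h0 : ∀ y ∈ G, u y 0 ≤ M) (hS : ∀ y ∈ frontier G, ∀ s ∈ Icc 0 T, u y s ≤ M)
    (hx : x ∈ closure G) (ht : t ∈ Ico 0 T) :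
    u x t ≤ M + N * (Real.Gamma (1 - α) * T ^ α) := by
  have : 0 < Real.Gamma (1 - α) := Real.Gamma_pos_of_pos (by linarith)
  have hTα : 0 ≤ T ^ α := Real.rpow_nonneg (ht.1.trans ht.2.le) α
  obtain ⟨⟨x₀, t₀⟩, ⟨hx₀, ht₀⟩, hmax⟩ :=
    (hGb.isCompact_closure.prod (isCompact_Icc (a := (0 : ℝ)) (b := t))).exists_isMaxOn
      ⟨(x, t), hx, right_mem_Icc.2 ht.1⟩
      (h.1.mono (prod_mono_right (Icc_subset_Icc_right ht.2.le)))
  have le_max {y : Fin n → ℝ} {s : ℝ} (hy : y ∈ closure G) (hs : s ∈ Icc 0 t) :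
      u y s ≤ u x₀ t₀ := hmax (mk_mem_prod hy hs)
  refine (le_max hx (right_mem_Icc.2 ht.1)).trans ?_
  obtain hle | hlt := le_or_gt (u x₀ t₀) M
  · exact hle.trans (le_add_of_nonneg_right (by positivity))
  have ht₀T : t₀ < T := ht₀.2.trans_lt ht.2
  have hx₀G : x₀ ∈ G := by
    by_contra hx₀G
    exact (hS x₀ (hG.frontier_eq ▸ ⟨hx₀, hx₀G⟩) t₀ ⟨ht₀.1, ht₀T.le⟩).not_gt hlt
  have ht₀pos : 0 < t₀ := by
    refine ht₀.1.lt_of_ne ?_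
    rintro rfl
    exact (h0 x₀ hx₀G).not_gt hlt
  have ht₀mem : t₀ ∈ Ioo 0 T := ⟨ht₀pos, ht₀T⟩
  have hspace : IsLocalMax (fun y => u y t₀) x₀ :=
    eventually_of_mem (hG.mem_nhds hx₀G) fun y hy => le_max (subset_closure hy) ht₀
  calc u x₀ t₀ ≤ u x₀ 0 + F x₀ t₀ * (Real.Gamma (1 - α) * t₀ ^ α) :=
        h.le_initial_add_of_isLocalMax hα hα1 hG hp hx₀G ht₀mem (hq x₀ hx₀G) (hM.trans hlt.le)
          hspace fun s hs => le_max hx₀ ⟨hs.1, hs.2.trans ht₀.2⟩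
    _ ≤ M + N * (Real.Gamma (1 - α) * T ^ α) := by
        gcongr
        exacts [h0 x₀ hx₀G, hF x₀ hx₀G t₀ ht₀mem]

theorem le_of_data_le (h : IsSolutionTFDE n α T G p q F u) (hα : 0 ≤ α) (hα1 : α < 1)
    (hT : 0 < T) (hG : IsOpen G) (hGb : Bornology.IsBounded G) (hp : ∀ y ∈ G, 0 < p y)
    (hq : ∀ y ∈ G, 0 ≤ q y) (hM : 0 ≤ M) (hN : 0 ≤ N) (hF : ∀ y ∈ G, ∀ s ∈ Ioo 0 T, F y s ≤ N)
    (h0 : ∀ y ∈ G, u y 0 ≤ M) (hS : ∀ y ∈ frontier G, ∀ s ∈ Icc 0 T, u y s ≤ M)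
    (hx : x ∈ closure G) (ht : t ∈ Icc 0 T) :
    u x t ≤ M + N * (Real.Gamma (1 - α) * T ^ α) := by
  rw [← closure_Ico hT.ne] at ht
  refine le_on_closure (fun s hs => h.le_of_data_le_of_lt hα hα1 hG hGb hp hq hM hN hF h0 hS hx hs)
    ?_ continuousOn_const ht
  rw [closure_Ico hT.ne]
  exact h.continuousOn_time hx

theorem abs_sub_le_of_abs_data_sub_le (hα : 0 ≤ α) (hα1 : α < 1) (hT : 0 < T) (hG : IsOpen G)
    (hGb : Bornology.IsBounded G) (hp : DifferentiableOn ℝ p G) (hppos : ∀ y ∈ G, 0 < p y)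
    (hq : ∀ y ∈ G, 0 ≤ q y) (h : IsSolutionTFDE n α T G p q F u)
    (h' : IsSolutionTFDE n α T G p q F' u')
    (hF : ∀ y ∈ G, ∀ s ∈ Ioo 0 T, |F y s - F' y s| ≤ N)
    (h0 : ∀ y ∈ G, |u y 0 - u' y 0| ≤ M)
    (hS : ∀ y ∈ frontier G, ∀ s ∈ Icc 0 T, |u y s - u' y s| ≤ M)
    (hx : x ∈ closure G) (ht : t ∈ Icc 0 T) :
    |u x t - u' x t| ≤ M + N * (Real.Gamma (1 - α) * T ^ α) := by
  obtain ⟨y, hy⟩ : G.Nonempty := closure_nonempty_iff.1 ⟨x, hx⟩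
  have hM : 0 ≤ M := (abs_nonneg _).trans (h0 y hy)
  have hN : 0 ≤ N := (abs_nonneg _).trans (hF y hy (T / 2) ⟨half_pos hT, half_lt_self hT⟩)
  simp only [abs_sub_le_iff] at hF h0 hS ⊢
  exact ⟨(sub hα1 hT.le hG hp h h').le_of_data_le hα hα1 hT hG hGb hppos hq hM hN
      (fun y hy s hs => (hF y hy s hs).1) (fun y hy => (h0 y hy).1)
      (fun y hy s hs => (hS y hy s hs).1) hx ht,
    (sub hα1 hT.le hG hp h' h).le_of_data_le hα hα1 hT hG hGb hppos hq hM hN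
      (fun y hy s hs => (hF y hy s hs).2) (fun y hy => (h0 y hy).2)
      (fun y hy s hs => (hS y hy s hs).2) hx ht⟩

end APriori

theorem tendstoUniformlyOn_sub_zero_of_data {ι : Type*} {l : Filter ι}
    {F F' u u' : ι → (Fin n → ℝ) → ℝ → ℝ} (hα : 0 ≤ α) (hα1 : α < 1) (hT : 0 < T) (hG : IsOpen G)
    (hGb : Bornology.IsBounded G) (hp : DifferentiableOn ℝ p G) (hppos : ∀ y ∈ G, 0 < p y)
    (hq : ∀ y ∈ G, 0 ≤ q y) (h : ∀ k, IsSolutionTFDE n α T G p q (F k) (u k))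
    (h' : ∀ k, IsSolutionTFDE n α T G p q (F' k) (u' k))
    (hF : TendstoUniformlyOn (fun k (z : (Fin n → ℝ) × ℝ) => F k z.1 z.2 - F' k z.1 z.2) 0 l
      (G ×ˢ Ioo 0 T))
    (h0 : TendstoUniformlyOn (fun k x => u k x 0 - u' k x 0) 0 l G)
    (hS : TendstoUniformlyOn (fun k (z : (Fin n → ℝ) × ℝ) => u k z.1 z.2 - u' k z.1 z.2) 0 l
      (frontier G ×ˢ Icc 0 T)) :
    TendstoUniformlyOn (fun k (z : (Fin n → ℝ) × ℝ) => u k z.1 z.2 - u' k z.1 z.2) 0 l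
      (closure G ×ˢ Icc 0 T) := by
  have : 0 < Real.Gamma (1 - α) := Real.Gamma_pos_of_pos (by linarith)
  simp only [Metric.tendstoUniformlyOn_iff, Pi.zero_apply, dist_zero_left, Real.norm_eq_abs]
    at hF h0 hS ⊢
  intro ε hε
  obtain ⟨δ, hδ, hδε⟩ := exists_pos_mul_lt hε (1 + Real.Gamma (1 - α) * T ^ α)
  filter_upwards [hF δ hδ, h0 δ hδ, hS δ hδ] with k hFk h0k hSk
  rintro ⟨x, t⟩ ⟨hx, ht⟩
  calc |u k x t - u' k x t|
      ≤ δ + δ * (Real.Gamma (1 - α) * T ^ α) :=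
        abs_sub_le_of_abs_data_sub_le hα hα1 hT hG hGb hp hppos hq (h k) (h' k)
          (fun y hy s hs => (hFk (y, s) ⟨hy, hs⟩).le) (fun y hy => (h0k y hy).le)
          (fun y hy s hs => (hSk (y, s) ⟨hy, hs⟩).le) hx ht
    _ = (1 + Real.Gamma (1 - α) * T ^ α) * δ := by ring
    _ < ε := hδε

end IsSolutionTFDE

/-- `u` is a generalized solution of the initial-boundary-value problem with data `(F, u₀, v)`:
a uniform limit on `Ḡ×[0,T]` of classical solutions `uₖ` whose data `(Fₖ, u₀ₖ, vₖ)` converge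
uniformly to `(F, u₀, v)`. Continuity of `u` on `Ḡ×[0,T]` is not a separate clause, being
inherited from the `uₖ`. -/
def IsGeneralizedSolutionTFDE (n : ℕ) (α T : ℝ) (G : Set (Fin n → ℝ)) (p q : (Fin n → ℝ) → ℝ)
    (F : (Fin n → ℝ) → ℝ → ℝ) (u₀ : (Fin n → ℝ) → ℝ) (v u : (Fin n → ℝ) → ℝ → ℝ) : Prop :=
  ∃ (Fk : ℕ → (Fin n → ℝ) → ℝ → ℝ) (u₀k : ℕ → (Fin n → ℝ) → ℝ)
    (vk uk : ℕ → (Fin n → ℝ) → ℝ → ℝ),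
    TendstoUniformlyOn (fun k (z : (Fin n → ℝ) × ℝ) => Fk k z.1 z.2) (fun z => F z.1 z.2) atTop
      (closure G ×ˢ Icc 0 T) ∧
    TendstoUniformlyOn (fun k x => u₀k k x) u₀ atTop (closure G) ∧
    TendstoUniformlyOn (fun k (z : (Fin n → ℝ) × ℝ) => vk k z.1 z.2) (fun z => v z.1 z.2) atTop
      (frontier G ×ˢ Icc 0 T) ∧
    (∀ k, IsSolutionTFDE n α T G p q (Fk k) (uk k) ∧ (∀ x ∈ closure G, uk k x 0 = u₀k k x) ∧
      ∀ x ∈ frontier G, ∀ t ∈ Icc 0 T, uk k x t = vk k x t) ∧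
    TendstoUniformlyOn (fun k (z : (Fin n → ℝ) × ℝ) => uk k z.1 z.2) (fun z => u z.1 z.2) atTop
      (closure G ×ˢ Icc 0 T)

theorem uniqueness_generalized_solution_TFDE_general {n : ℕ} {α T : ℝ} {G : Set (Fin n → ℝ)}
    {p q : (Fin n → ℝ) → ℝ} {F v u u' : (Fin n → ℝ) → ℝ → ℝ} {u₀ : (Fin n → ℝ) → ℝ}
    (hα : 0 ≤ α) (hα1 : α < 1) (hT : 0 < T) (hG : IsOpen G) (hGb : Bornology.IsBounded G)
    (hp : DifferentiableOn ℝ p G) (hppos : ∀ x ∈ G, 0 < p x) (hq : ∀ x ∈ G, 0 ≤ q x)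
    (h : IsGeneralizedSolutionTFDE n α T G p q F u₀ v u)
    (h' : IsGeneralizedSolutionTFDE n α T G p q F u₀ v u') :
    ∀ x ∈ closure G, ∀ t ∈ Icc 0 T, u x t = u' x t := by
  obtain ⟨Fk, u₀k, vk, uk, hFk, hu₀k, hvk, huk, hulim⟩ := h
  obtain ⟨Fk', u₀k', vk', uk', hFk', hu₀k', hvk', huk', hulim'⟩ := h'
  have hF := tendstoUniformlyOn_sub_zero_of_eqOn hFk hFk' (fun _ _ _ => rfl)
    (fun _ _ _ => rfl)
  have h0 := tendstoUniformlyOn_sub_zero_of_eqOn hu₀k hu₀k'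
    (g := fun k x => uk k x 0) (g' := fun k x => uk' k x 0)
    (fun k x hx => ((huk k).2.1 x hx).symm) (fun k x hx => ((huk' k).2.1 x hx).symm)
  have hS := tendstoUniformlyOn_sub_zero_of_eqOn hvk hvk'
    (g := fun k z => uk k z.1 z.2) (g' := fun k z => uk' k z.1 z.2)
    (fun k z hz => ((huk k).2.2 z.1 hz.1 z.2 hz.2).symm)
    (fun k z hz => ((huk' k).2.2 z.1 hz.1 z.2 hz.2).symm)
  have hsub := IsSolutionTFDE.tendstoUniformlyOn_sub_zero_of_data hα hα1 hT hG hGb hp hppos hq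
    (fun k => (huk k).1) (fun k => (huk' k).1)
    (hF.mono (prod_mono subset_closure Ioo_subset_Icc_self)) (h0.mono subset_closure) hS
  intro x hx t ht
  have hz : (x, t) ∈ closure G ×ˢ Icc 0 T := ⟨hx, ht⟩
  exact sub_eq_zero.1 (tendsto_nhds_unique ((hulim.tendsto_at hz).sub (hulim'.tendsto_at hz))
    (hsub.tendsto_at hz))

/-- Uniqueness of the generalized solution: if two sequences of data
`(Fₖ, u₀ₖ, vₖ)` and `(Fₖ', u₀ₖ', vₖ')` converge uniformly (on `Ḡ×[0,T]`, `Ḡ` and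
`S×[0,T]` respectively) to the same limits `(F, u₀, v)`, for each `k` there are classical
solutions `uₖ`, `uₖ'` of the corresponding initial-boundary-value problems, and
`uₖ → u`, `uₖ' → u'` uniformly on `Ḡ×[0,T]` with `u`, `u'` continuous, then `u = u'`
on `Ḡ×[0,T]`. -/
theorem uniqueness_generalized_solution_TFDE (n : ℕ) (α T : ℝ)
    (hα : 0 < α) (hα1 : α < 1) (hT : 0 < T)
    (G : Set (Fin n → ℝ)) (hG : IsOpen G) (hGb : Bornology.IsBounded G)
    (p q : (Fin n → ℝ) → ℝ)
    (hp : ContDiffOn ℝ 1 p (closure G)) (hppos : ∀ x ∈ closure G, 0 < p x)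
    (hq : ContinuousOn q (closure G)) (hqnn : ∀ x ∈ closure G, 0 ≤ q x)
    (F : (Fin n → ℝ) → ℝ → ℝ) (u₀ : (Fin n → ℝ) → ℝ) (v : (Fin n → ℝ) → ℝ → ℝ)
    (Fk Fk' : ℕ → (Fin n → ℝ) → ℝ → ℝ)
    (u₀k u₀k' : ℕ → (Fin n → ℝ) → ℝ)
    (vk vk' : ℕ → (Fin n → ℝ) → ℝ → ℝ)
    (uk uk' : ℕ → (Fin n → ℝ) → ℝ → ℝ)
    (u u' : (Fin n → ℝ) → ℝ → ℝ)
    -- the data sequences converge uniformly to the common limits (F, u₀, v)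
    (hFk : TendstoUniformlyOn (fun k (z : (Fin n → ℝ) × ℝ) => Fk k z.1 z.2)
      (fun z => F z.1 z.2) Filter.atTop (closure G ×ˢ Set.Icc 0 T))
    (hFk' : TendstoUniformlyOn (fun k (z : (Fin n → ℝ) × ℝ) => Fk' k z.1 z.2)
      (fun z => F z.1 z.2) Filter.atTop (closure G ×ˢ Set.Icc 0 T))
    (hu₀k : TendstoUniformlyOn (fun k x => u₀k k x) u₀ Filter.atTop (closure G))
    (hu₀k' : TendstoUniformlyOn (fun k x => u₀k' k x) u₀ Filter.atTop (closure G))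
    (hvk : TendstoUniformlyOn (fun k (z : (Fin n → ℝ) × ℝ) => vk k z.1 z.2)
      (fun z => v z.1 z.2) Filter.atTop (frontier G ×ˢ Set.Icc 0 T))
    (hvk' : TendstoUniformlyOn (fun k (z : (Fin n → ℝ) × ℝ) => vk' k z.1 z.2)
      (fun z => v z.1 z.2) Filter.atTop (frontier G ×ˢ Set.Icc 0 T))
    -- for each k, uk k and uk' k are classical solutions with the respective data
    (huk : ∀ k, IsSolutionTFDE n α T G p q (Fk k) (uk k) ∧
      (∀ x ∈ closure G, uk k x 0 = u₀k k x) ∧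
      (∀ x ∈ frontier G, ∀ t ∈ Set.Icc (0:ℝ) T, uk k x t = vk k x t))
    (huk' : ∀ k, IsSolutionTFDE n α T G p q (Fk' k) (uk' k) ∧
      (∀ x ∈ closure G, uk' k x 0 = u₀k' k x) ∧
      (∀ x ∈ frontier G, ∀ t ∈ Set.Icc (0:ℝ) T, uk' k x t = vk' k x t))
    -- the solution sequences converge uniformly to u and u'
    (hcu : ContinuousOn (fun z : (Fin n → ℝ) × ℝ => u z.1 z.2) (closure G ×ˢ Set.Icc 0 T))
    (hcu' : ContinuousOn (fun z : (Fin n → ℝ) × ℝ => u' z.1 z.2) (closure G ×ˢ Set.Icc 0 T))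
    (hulim : TendstoUniformlyOn (fun k (z : (Fin n → ℝ) × ℝ) => uk k z.1 z.2)
      (fun z => u z.1 z.2) Filter.atTop (closure G ×ˢ Set.Icc 0 T))
    (hulim' : TendstoUniformlyOn (fun k (z : (Fin n → ℝ) × ℝ) => uk' k z.1 z.2)
      (fun z => u' z.1 z.2) Filter.atTop (closure G ×ˢ Set.Icc 0 T)) :
    ∀ x ∈ closure G, ∀ t ∈ Set.Icc (0:ℝ) T, u x t = u' x t :=
  uniqueness_generalized_solution_TFDE_general hα.le hα1 hT hG hGb
    ((hp.mono subset_closure).differentiableOn one_ne_zero)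
    (fun x hx => hppos x (subset_closure hx)) (fun x hx => hqnn x (subset_closure hx))
    ⟨Fk, u₀k, vk, uk, hFk, hu₀k, hvk, huk, hulim⟩
    ⟨Fk', u₀k', vk', uk', hFk', hu₀k', hvk', huk', hulim'⟩
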